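/- Let p, q, r be the permutations of {0,…,20} given in cycle notation by p = (2 7)(3 11)(5 12)(8 18)(13 14)(15 17)(16 20), q = (0 17)(3 8)(4 12)(6 13)(9 19)(14 15)(16 18), r = (1 8)(2 16)(4 11)(5 19)(7 14)(10 17)(13 20), and p' = (0 1)(4 17)(7 12)(9 16)(10 20)(11 13)(15 19), q' = (0 20)(3 16)(6 11)(8 15)(9 19)(10 12)(14 18), r' = r. Let G be the subgroup of Sym(21) × Sym(21) generated by (p,p'), (q,q'), (r,r'), and let A = {(σ,τ) ∈ G : σ(0) = 0}, B = {(σ,τ) ∈ G : τ(0) = 0}. Then for every (σ,τ) ∈ G the number of fixed points of σ equals the number of fixed points of τ; A and B are Gassmann equivalent subgroups of G of index 21; and A and B are not conjugate in G. -/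

import Mathlib

open Equiv

/-- p = (2 7)(3 11)(5 12)(8 18)(13 14)(15 17)(16 20) -/
def p : Perm (Fin 21) := swap 2 7 * swap 3 11 * swap 5 12 * swap 8 18 * swap 13 14 * swap 15 17 * swap 16 20
/-- q = (0 17)(3 8)(4 12)(6 13)(9 19)(14 15)(16 18) -/
def q : Perm (Fin 21) := swap 0 17 * swap 3 8 * swap 4 12 * swap 6 13 * swap 9 19 * swap 14 15 * swap 16 18
/-- r = (1 8)(2 16)(4 11)(5 19)(7 14)(10 17)(13 20) -/
def r : Perm (Fin 21) := swap 1 8 * swap 2 16 * swap 4 11 * swap 5 19 * swap 7 14 * swap 10 17 * swap 13 20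
/-- p' = (0 1)(4 17)(7 12)(9 16)(10 20)(11 13)(15 19) -/
def p' : Perm (Fin 21) := swap 0 1 * swap 4 17 * swap 7 12 * swap 9 16 * swap 10 20 * swap 11 13 * swap 15 19
/-- q' = (0 20)(3 16)(6 11)(8 15)(9 19)(10 12)(14 18) -/
def q' : Perm (Fin 21) := swap 0 20 * swap 3 16 * swap 6 11 * swap 8 15 * swap 9 19 * swap 10 12 * swap 14 18
/-- r' = (1 8)(2 16)(4 11)(5 19)(7 14)(10 17)(13 20) -/
def r' : Perm (Fin 21) := swap 1 8 * swap 2 16 * swap 4 11 * swap 5 19 * swap 7 14 * swap 10 17 * swap 13 20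

/-- The subgroup of Sym(21) × Sym(21) generated by (p,p'), (q,q'), (r,r'). -/
def G₀ : Subgroup (Perm (Fin 21) × Perm (Fin 21)) :=
  Subgroup.closure {(p, p'), (q, q'), (r, r')}

/-- A = {(σ,τ) ∈ G₀ : σ 0 = 0}, the point stabilizer in the first action. -/
def A : Subgroup G₀ where
  carrier := {g | (g : Perm (Fin 21) × Perm (Fin 21)).1 0 = 0}
  one_mem' := rfl
  mul_mem' := by
    intro x y hx hy
    simp only [Set.mem_setOf_eq] at *
    simp [Subgroup.coe_mul, Perm.mul_apply, hx, hy]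
  inv_mem' := by
    intro x hx
    simp only [Set.mem_setOf_eq] at *
    conv_lhs => rw [← hx]
    simp

/-- B = {(σ,τ) ∈ G₀ : τ 0 = 0}, the point stabilizer in the second action. -/
def B : Subgroup G₀ where
  carrier := {g | (g : Perm (Fin 21) × Perm (Fin 21)).2 0 = 0}
  one_mem' := rfl
  mul_mem' := by
    intro x y hx hy
    simp only [Set.mem_setOf_eq] at *
    simp [Subgroup.coe_mul, Perm.mul_apply, hx, hy]
  inv_mem' := by
    intro x hx
    simp only [Set.mem_setOf_eq] at *
    conv_lhs => rw [← hx]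
    simp

/-!
`G₀` acts on the points and on the lines of the projective plane of order 4 by collineations.
A collineation fixes as many points as lines, so the two transitive actions have the same
permutation character and their point stabilizers are Gassmann equivalent. A conjugate of `A` is the
stabilizer of a point, but `B`, the stabilizer of a line, moves every point.
-/

open Finset MulAction

section SymmetricDesign

variable {X Y : Type*} [Fintype X] [Fintype Y]

/-- A symmetric block design (such as a projective plane) with points `X`, blocks `Y` and incidence
relation `I`: any point lies on `k` blocks and any two distinct points on `l` common blocks. The
dual conditions are included, so that points and blocks play interchangeable roles. -/
structure IsSymmetricDesign (I : X → Y → Prop) [∀ x y, Decidable (I x y)] (k l : ℕ) : Prop where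
  card_eq : Fintype.card X = Fintype.card Y
  card_blocks (x : X) : #{y | I x y} = k
  card_points (y : Y) : #{x | I x y} = k
  card_common_blocks (x x' : X) : x ≠ x' → #{y | I x y ∧ I x' y} = l
  card_common_points (y y' : Y) : y ≠ y' → #{x | I x y ∧ I x y'} = l

namespace IsSymmetricDesign

variable {I : X → Y → Prop} [∀ x y, Decidable (I x y)] {k l : ℕ}

lemma dual (h : IsSymmetricDesign I k l) : IsSymmetricDesign (fun y x ↦ I x y) k l where
  card_eq := h.card_eq.symm
  card_blocks := h.card_points
  card_points := h.card_blocks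
  card_common_blocks := h.card_common_points
  card_common_points := h.card_common_blocks

lemma sum_card_common_blocks [DecidableEq X] (h : IsSymmetricDesign I k l) (f : X → X) :
    ∑ x, #{y | I x y ∧ I (f x) y} = #{x | f x = x} * k + #{x | f x ≠ x} * l := by
  have common (x : X) : #{y | I x y ∧ I (f x) y} = if f x = x then k else l := by
    split_ifs with hx
    · simpa [hx] using h.card_blocks x
    · exact h.card_common_blocks x (f x) (Ne.symm hx)
  simp [common, sum_ite]

/-- Both numbers of fixed points are determined by the number of flags `(x, y)` with `y` also
incident with `σ x`, counted once by points and once by blocks. -/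
theorem card_fixedPoints_eq [DecidableEq X] [DecidableEq Y] (h : IsSymmetricDesign I k l)
    (hkl : k ≠ l) {σ : Perm X} {τ : Perm Y} (hI : ∀ x y, I (σ x) (τ y) ↔ I x y) :
    #{x | σ x = x} = #{y | τ y = y} := by
  have adjoint (x : X) (y : Y) : I (σ x) y ↔ I x (τ.symm y) := by
    simpa using hI x (τ.symm y)
  have flags : #{x | σ x = x} * k + #{x | σ x ≠ x} * l =
      #{y | τ y = y} * k + #{y | τ y ≠ y} * l := by
    calc _ = ∑ x, #{y | I x y ∧ I (σ x) y} := (h.sum_card_common_blocks σ).symm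
      _ = ∑ y, #{x | I x y ∧ I x (τ.symm y)} := by
        simp only [adjoint]
        exact sum_card_bipartiteAbove_eq_sum_card_bipartiteBelow _
      _ = _ := by
        rw [h.dual.sum_card_common_blocks]
        simp only [ne_eq, Equiv.symm_apply_eq, eq_comm (b := τ _)]
  have total : #{x | σ x = x} + #{x | σ x ≠ x} = #{y | τ y = y} + #{y | τ y ≠ y} := by
    simpa only [card_filter_add_card_filter_not, card_univ] using h.card_eq
  have hkl' : (k : ℤ) - l ≠ 0 := sub_ne_zero.2 (mod_cast hkl)
  zify at flags total ⊢
  exact mul_left_cancel₀ hkl' (by linear_combination flags - l * total)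

end IsSymmetricDesign

end SymmetricDesign

section GassmannEquivalent

variable {G : Type*} [Group G]

/-- Gassmann equivalence of two subgroups of a finite group: they meet each conjugacy class in the
same number of elements. (An infinite intersection would be counted as 0.) -/
def GassmannEquivalent (H K : Subgroup G) : Prop :=
  ∀ g, Nat.card ((H : Set G) ∩ conjugatesOf g : Set G) =
    Nat.card ((K : Set G) ∩ conjugatesOf g : Set G)

variable {X Y : Type*} [MulAction G X] [MulAction G Y]

lemma card_stabilizer_smul_inter_conjugatesOf (g t : G) (x : X) :
    Nat.card ((stabilizer G (t • x) : Set G) ∩ conjugatesOf g : Set G) =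
      Nat.card ((stabilizer G x : Set G) ∩ conjugatesOf g : Set G) := by
  refine (Nat.card_congr ((MulAut.conj t).toEquiv.subtypeEquiv fun h ↦ ?_)).symm
  have mem_conj : h ∈ conjugatesOf g ↔ t * h * t⁻¹ ∈ conjugatesOf g :=
    have h_conj : IsConj h (t * h * t⁻¹) := isConj_iff.2 ⟨t, rfl⟩
    ⟨fun hg ↦ IsConj.trans hg h_conj, fun hg ↦ IsConj.trans hg h_conj.symm⟩
  simp [mul_smul, mem_conj]

lemma card_sigma_fixedBy_conjugatesOf [Finite G] [IsPretransitive G X] (g : G) (x : X) :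
    Nat.card (Σ h : conjugatesOf g, fixedBy X (h : G)) =
      Nat.card X * Nat.card ((stabilizer G x : Set G) ∩ conjugatesOf g : Set G) := by
  have : Finite X := .of_surjective _ (surjective_smul G x)
  have := Fintype.ofFinite X
  let swapSigma : (Σ h : conjugatesOf g, fixedBy X (h : G)) ≃
      Σ y : X, ((stabilizer G y : Set G) ∩ conjugatesOf g : Set G) :=
    { toFun z := ⟨z.2, z.1, z.2.2, z.1.2⟩
      invFun z := ⟨⟨z.2, z.2.2.2⟩, z.1, z.2.2.1⟩ }
  have card_eq (y : X) : Nat.card ((stabilizer G y : Set G) ∩ conjugatesOf g : Set G) =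
      Nat.card ((stabilizer G x : Set G) ∩ conjugatesOf g : Set G) := by
    obtain ⟨t, rfl⟩ := exists_smul_eq G x y
    exact card_stabilizer_smul_inter_conjugatesOf g t x
  rw [Nat.card_congr swapSigma, Nat.card_sigma]
  simp only [card_eq, sum_const, card_univ, Nat.card_eq_fintype_card (α := X), smul_eq_mul]

theorem gassmannEquivalent_stabilizer [Finite G] [IsPretransitive G X] [IsPretransitive G Y]
    (h : ∀ g : G, Nat.card (fixedBy X g) = Nat.card (fixedBy Y g)) (x : X) (y : Y) :
    GassmannEquivalent (stabilizer G x) (stabilizer G y) := by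
  intro g
  have : Finite X := .of_surjective _ (surjective_smul G x)
  have : Finite Y := .of_surjective _ (surjective_smul G y)
  have : Nonempty X := ⟨x⟩
  have card_eq : Nat.card X = Nat.card Y := by simpa using h 1
  have := Fintype.ofFinite (conjugatesOf g)
  refine Nat.eq_of_mul_eq_mul_left (Nat.card_pos (α := X)) ?_
  calc _ = Nat.card (Σ h : conjugatesOf g, fixedBy X (h : G)) :=
        (card_sigma_fixedBy_conjugatesOf g x).symm
    _ = Nat.card (Σ h : conjugatesOf g, fixedBy Y (h : G)) := by simp only [Nat.card_sigma, h]
    _ = _ := by rw [card_sigma_fixedBy_conjugatesOf g y, card_eq]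

end GassmannEquivalent

section Plane

/-- The points of the projective plane of order 4: the first copy of `Fin 21` that `G₀` permutes. -/
def Point : Type := Fin 21
deriving DecidableEq, Fintype, Zero

/-- The lines of the projective plane of order 4: the second copy of `Fin 21` that `G₀` permutes. -/
def Line : Type := Fin 21
deriving DecidableEq, Fintype, Zero

instance : MulAction (Perm (Fin 21) × Perm (Fin 21)) Point :=
  .compHom (Fin 21) (MonoidHom.fst _ _)

instance : MulAction (Perm (Fin 21) × Perm (Fin 21)) Line :=
  .compHom (Fin 21) (MonoidHom.snd _ _)

/-- Incidence in the projective plane of order 4, constructed from the perfect difference set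
`{3, 6, 7, 12, 14}` modulo 21. This translate of the difference set is the one preserved by
`G₀`. -/
def Incident : Point → Line → Prop :=
  fun x y : Fin 21 ↦ x + y ∈ ({3, 6, 7, 12, 14} : Finset (Fin 21))

instance (x : Point) (y : Line) : Decidable (Incident x y) :=
  inferInstanceAs (Decidable ((_ : Fin 21) ∈ _))

lemma isSymmetricDesign_incident : IsSymmetricDesign Incident 5 1 where
  card_eq := rfl
  card_blocks := by decide +kernel
  card_points := by decide +kernel
  card_common_blocks := by decide +kernel
  card_common_points := by decide +kernel

lemma incident_smul_smul_iff {g : Perm (Fin 21) × Perm (Fin 21)} (hg : g ∈ G₀) :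
    ∀ (x : Point) (y : Line), Incident (g • x) (g • y) ↔ Incident x y := by
  induction hg using Subgroup.closure_induction with
  | mem g hg => rcases hg with rfl | rfl | rfl <;> decide +kernel
  | one => simp
  | mul a b _ _ ha hb => simp [mul_smul, ha, hb]
  | inv a _ ha =>
    intro x y
    simpa using (ha (a⁻¹ • x) (a⁻¹ • y)).symm

theorem card_fixedBy_point_eq_card_fixedBy_line (g : G₀) :
    Nat.card (fixedBy Point g) = Nat.card (fixedBy Line g) := by
  calc Nat.card (fixedBy Point g) = #{x : Point | g • x = x} := Nat.subtype_card _ (by simp)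
    _ = #{y : Line | g • y = y} :=
      isSymmetricDesign_incident.card_fixedPoints_eq (by decide)
        (σ := toPerm g) (τ := toPerm g) (incident_smul_smul_iff g.2)
    _ = Nat.card (fixedBy Line g) := (Nat.subtype_card _ (by simp)).symm

/-- `(p, p')` as an element of `G₀`. -/
def genP : G₀ := ⟨(p, p'), Subgroup.subset_closure (by simp)⟩

/-- `(q, q')` as an element of `G₀`. -/
def genQ : G₀ := ⟨(q, q'), Subgroup.subset_closure (by simp)⟩

/-- `(r, r')` as an element of `G₀`. -/
def genR : G₀ := ⟨(r, r'), Subgroup.subset_closure (by simp)⟩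

/-- A Singer cycle: an element permuting the points, and likewise the lines, in a single cycle. -/
def singer : G₀ := genP * genQ * genR * genP * genQ * genR * genP * genQ

lemma exists_singer_pow_smul_zero_eq_point :
    ∀ x : Point, ∃ k : Fin 21, singer ^ (k : ℕ) • 0 = x := by
  decide +kernel

lemma exists_singer_pow_smul_zero_eq_line :
    ∀ y : Line, ∃ k : Fin 21, singer ^ (k : ℕ) • 0 = y := by
  decide +kernel

instance : IsPretransitive G₀ Point :=
  .of_orbit fun x ↦ let ⟨k, hk⟩ := exists_singer_pow_smul_zero_eq_point x; ⟨singer ^ (k : ℕ), hk⟩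

instance : IsPretransitive G₀ Line :=
  .of_orbit fun y ↦ let ⟨k, hk⟩ := exists_singer_pow_smul_zero_eq_line y; ⟨singer ^ (k : ℕ), hk⟩

lemma not_stabilizer_line_le_stabilizer_point (x : Point) :
    ¬ stabilizer G₀ (0 : Line) ≤ stabilizer G₀ x := by
  intro h
  let s : G₀ := genQ * genR * genP * genQ * genP * genR * genQ * genP * genR * genQ
  have hr : genR • x = x := h (show genR • (0 : Line) = 0 by decide +kernel)
  have hs : s • x = x := h (show s • (0 : Line) = 0 by decide +kernel)
  -- The fixed points of `r` are the multiples of 3, those of `s` are 5, 7 and 14.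
  have no_common : ∀ z : Point, ¬ (genR • z = z ∧ s • z = z) := by decide +kernel
  exact no_common x ⟨hr, hs⟩

lemma A_eq_stabilizer : A = stabilizer G₀ (0 : Point) := rfl

lemma B_eq_stabilizer : B = stabilizer G₀ (0 : Line) := rfl

end Plane

/-- Every element of `G₀` has equally many fixed points in its two coordinates; the point
stabilizers `A` and `B` are Gassmann equivalent of index 21, but not conjugate. -/
theorem fixed_gassmann_not_conjugate :
    (∀ p ∈ G₀, Nat.card {x : Fin 21 // p.1 x = x} = Nat.card {x : Fin 21 // p.2 x = x}) ∧
    (∀ g : G₀,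
      Nat.card ((A : Set G₀) ∩ {x : G₀ | IsConj g x} : Set G₀) =
      Nat.card ((B : Set G₀) ∩ {x : G₀ | IsConj g x} : Set G₀)) ∧
    A.index = 21 ∧ B.index = 21 ∧
    ¬ ∃ x : G₀, Subgroup.map (MulAut.conj x).toMonoidHom A = B := by
  refine ⟨fun g hg ↦ card_fixedBy_point_eq_card_fixedBy_line ⟨g, hg⟩,
    gassmannEquivalent_stabilizer card_fixedBy_point_eq_card_fixedBy_line (0 : Point) (0 : Line),
    (index_stabilizer_of_transitive G₀ (0 : Point)).trans (Nat.card_fin 21),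
    (index_stabilizer_of_transitive G₀ (0 : Line)).trans (Nat.card_fin 21), ?_⟩
  rintro ⟨g, hg⟩
  rw [A_eq_stabilizer, B_eq_stabilizer, ← stabilizer_smul_eq_stabilizer_map_conj] at hg
  exact not_stabilizer_line_le_stabilizer_point (g • 0) hg.ge
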